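/- Let 1 < d < D − 1 be integers, let P be an orthogonal projection of rank d on ℂ^D, and let φ ∈ ℂ^D be a fixed unit vector. Let a ≥ 0 satisfy √a < d/D and √a + d/D < 1. Then the Haar probability of the set of U ∈ U(D) with ( ⟨φ, U P U⁻¹ φ⟩ − d/D )² ≥ a equals ((D−1)!/((d−1)!·(D−d−1)!)) · ∫_{[0, d/D − √a] ∪ [d/D + √a, 1]} u^{d−1}·(1−u)^{D−d−1} du. Equivalently, the unitarily invariant probability measure of { φ ∈ S : (‖Pφ‖² − d/D)² ≥ a } equals the same expression. -/

import Mathlib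

open MeasureTheory Filter

noncomputable section

/-- The unitary group U(D) of ℂ^D. -/
abbrev UG (D : ℕ) := Matrix.unitaryGroup (Fin D) ℂ

instance (D : ℕ) : MeasurableSpace (UG D) := borel _
instance (D : ℕ) : BorelSpace (UG D) := ⟨rfl⟩

/-- The squared euclidean norm ‖v‖² on ℂ^D. -/
def nsq {D : ℕ} (v : Fin D → ℂ) : ℝ := ∑ i, ‖v i‖ ^ 2

/-- The hermitian inner product ⟨v,w⟩ on ℂ^D (conjugate-linear in the first variable). -/
def dotc {D : ℕ} (v w : Fin D → ℂ) : ℂ := ∑ i, (starRingEnd ℂ) (v i) * w i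

/-- The orthogonal projection U P U⁻¹ onto the image under U of the range of P. -/
def rotProj {D : ℕ} (U : UG D) (P : Matrix (Fin D) (Fin D) ℂ) : Matrix (Fin D) (Fin D) ℂ :=
  (U : Matrix (Fin D) (Fin D) ℂ) * P * ((U⁻¹ : UG D) : Matrix (Fin D) (Fin D) ℂ)

/-!
Normalising a standard Gaussian vector of `ℂ^D` gives a unitarily invariant probability measure on
the unit sphere. The unitary group acts transitively there, so averaging over it shows that this
is the only such measure, and that it is also the law of `U⁻¹ φ` for Haar distributed `U`; moreover
`⟨φ, U P U⁻¹ φ⟩ = ‖P (U⁻¹ φ)‖²`. For a Gaussian vector `x`, the squared norms of `P x` and `x - P x`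
are independent Gamma variables with shapes `d` and `D - d`, so `‖P x‖² / ‖x‖²` has the
`Beta(d, D - d)` distribution.
-/

open ProbabilityTheory
open scoped ENNReal Matrix Matrix.Module

lemma ofReal_abs_mul_lintegral_comp_mul_left (f : ℝ → ℝ≥0∞) {x : ℝ} (hx : x ≠ 0) :
    ENNReal.ofReal |x| * ∫⁻ u, f (x * u) = ∫⁻ s, f s := by
  have hmul : MeasurableEmbedding fun u : ℝ => x * u := measurableEmbedding_mulLeft₀ hx
  conv_rhs => rw [← Real.smul_map_volume_mul_left hx]
  rw [lintegral_smul_measure, hmul.lintegral_map, smul_eq_mul]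

lemma lintegral_lintegral_eq_lintegral_lintegral_mul_mul_one_sub {f : ℝ → ℝ → ℝ≥0∞}
    (hf : Measurable (Function.uncurry f)) :
    ∫⁻ s, ∫⁻ t, f s t = ∫⁻ x, ∫⁻ u, ENNReal.ofReal |x| * f (x * u) (x * (1 - u)) := by
  have hsub : Measurable fun p : ℝ × ℝ => f p.1 (p.2 - p.1) :=
    hf.comp (measurable_fst.prodMk (measurable_snd.sub measurable_fst))
  calc ∫⁻ s, ∫⁻ t, f s t
      = ∫⁻ s, ∫⁻ x, f s (x - s) :=
        lintegral_congr fun s => (lintegral_sub_right_eq_self (f s) s).symm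
    _ = ∫⁻ x, ∫⁻ s, f s (x - s) := lintegral_lintegral_swap hsub.aemeasurable
    _ = ∫⁻ x, ∫⁻ u, ENNReal.ofReal |x| * f (x * u) (x * (1 - u)) := by
        refine lintegral_congr_ae ?_
        filter_upwards [Measure.ae_ne volume 0] with x hx
        rw [← ofReal_abs_mul_lintegral_comp_mul_left _ hx,
          ← lintegral_const_mul' _ _ ENNReal.ofReal_ne_top]
        simp only [mul_sub, mul_one]

lemma gammaPDF_mul_gammaPDF {a b r : ℝ} (ha : 0 < a) (hb : 0 < b) (hr : 0 < r)
    {x u : ℝ} (hx : x ≠ 0) (hu₀ : u ≠ 0) (hu₁ : u ≠ 1) :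
    ENNReal.ofReal |x| * (gammaPDF a r (x * u) * gammaPDF b r (x * (1 - u))) =
      gammaPDF (a + b) r x * betaPDF a b u := by
  rcases hx.lt_or_gt with hx | hx
  · rw [gammaPDF_of_neg hx, zero_mul]
    rcases le_or_gt u 0 with hu | hu
    · rw [gammaPDF_of_neg (mul_neg_of_neg_of_pos hx (by linarith : 0 < 1 - u)), mul_zero, mul_zero]
    · rw [gammaPDF_of_neg (mul_neg_of_neg_of_pos hx hu), zero_mul, mul_zero]
  rcases hu₀.lt_or_gt with hu | hu₀
  · rw [betaPDF_eq_zero_of_nonpos hu.le, gammaPDF_of_neg (mul_neg_of_pos_of_neg hx hu)]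
    simp only [zero_mul, mul_zero]
  rcases hu₁.lt_or_gt with hu₁ | hu
  · have hv : 0 < 1 - u := sub_pos.2 hu₁
    rw [gammaPDF_of_nonneg (by positivity), gammaPDF_of_nonneg (by positivity),
      gammaPDF_of_nonneg hx.le, betaPDF_of_pos_lt_one hu₀ hu₁,
      ← ENNReal.ofReal_mul (by positivity), ← ENNReal.ofReal_mul (by positivity),
      ← ENNReal.ofReal_mul (by positivity), abs_of_pos hx, beta, one_div_div]
    have hexp : Real.exp (-(r * x)) =
        Real.exp (-(r * (x * u))) * Real.exp (-(r * (x * (1 - u)))) := by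
      rw [← Real.exp_add]; ring_nf
    have hxpow : x ^ (a + b - 1) = x * (x ^ (a - 1) * x ^ (b - 1)) := by
      rw [← Real.rpow_add hx, mul_comm, ← Real.rpow_add_one hx.ne']; ring_nf
    rw [hexp, hxpow, Real.rpow_add hr, Real.mul_rpow hx.le hu₀.le, Real.mul_rpow hx.le hv.le]
    have := (Real.Gamma_pos_of_pos ha).ne'
    have := (Real.Gamma_pos_of_pos hb).ne'
    have := (Real.Gamma_pos_of_pos (add_pos ha hb)).ne'
    congr 1
    field_simp
  · rw [betaPDF_eq_zero_of_one_le hu.le,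
      gammaPDF_of_neg (mul_neg_of_pos_of_neg hx (sub_neg.2 hu))]
    simp only [mul_zero]

lemma measurable_gammaPDF (a r : ℝ) : Measurable (gammaPDF a r) :=
  (measurable_gammaPDFReal a r).ennreal_ofReal

lemma measurable_betaPDF (a b : ℝ) : Measurable (betaPDF a b) :=
  (measurable_betaPDFReal a b).ennreal_ofReal

theorem map_add_div_gammaMeasure_prod {a b r : ℝ} (ha : 0 < a) (hb : 0 < b) (hr : 0 < r) :
    ((gammaMeasure a r).prod (gammaMeasure b r)).map (fun z => (z.1 + z.2, z.1 / (z.1 + z.2))) =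
      (gammaMeasure (a + b) r).prod (betaMeasure a b) := by
  have := measurable_gammaPDF
  have := measurable_betaPDF
  refine Measure.ext_of_lintegral _ fun g hg => ?_
  rw [lintegral_map hg (by fun_prop), gammaMeasure, gammaMeasure, gammaMeasure, betaMeasure,
    prod_withDensity (by fun_prop) (by fun_prop), prod_withDensity (by fun_prop) (by fun_prop),
    lintegral_withDensity_eq_lintegral_mul _ (by fun_prop) (by fun_prop),
    lintegral_withDensity_eq_lintegral_mul _ (by fun_prop) hg,
    lintegral_prod _ (by fun_prop), lintegral_prod _ (by fun_prop)]
  simp only [Pi.mul_apply]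
  rw [lintegral_lintegral_eq_lintegral_lintegral_mul_mul_one_sub (by fun_prop)]
  refine lintegral_congr_ae ?_
  filter_upwards [Measure.ae_ne volume 0] with x hx
  refine lintegral_congr_ae ?_
  filter_upwards [Measure.ae_ne volume 0, Measure.ae_ne volume 1] with u hu₀ hu₁
  have hsum : x * u + x * (1 - u) = x := by ring
  rw [hsum, mul_div_cancel_left₀ u hx, ← mul_assoc, gammaPDF_mul_gammaPDF ha hb hr hx hu₀ hu₁]

section HasLaw

variable {Ω : Type*} {mΩ : MeasurableSpace Ω} {P : Measure Ω} {X Y : Ω → ℝ} {a b r : ℝ}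

theorem hasLaw_add_div_gammaMeasure (hX : HasLaw X (gammaMeasure a r) P)
    (hY : HasLaw Y (gammaMeasure b r) P) (hXY : X ⟂ᵢ[P] Y) (ha : 0 < a) (hb : 0 < b) (hr : 0 < r) :
    HasLaw (fun ω => (X ω + Y ω, X ω / (X ω + Y ω)))
      ((gammaMeasure (a + b) r).prod (betaMeasure a b)) P := by
  have := isProbabilityMeasure_gammaMeasure ha hr
  have := isProbabilityMeasure_gammaMeasure hb hr
  have := hX.isProbabilityMeasure
  have htf : HasLaw (fun z : ℝ × ℝ => (z.1 + z.2, z.1 / (z.1 + z.2)))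
      ((gammaMeasure (a + b) r).prod (betaMeasure a b))
      ((gammaMeasure a r).prod (gammaMeasure b r)) :=
    ⟨by fun_prop, map_add_div_gammaMeasure_prod ha hb hr⟩
  exact htf.comp (hXY.hasLaw_prod hX hY)

theorem hasLaw_add_gammaMeasure (hX : HasLaw X (gammaMeasure a r) P)
    (hY : HasLaw Y (gammaMeasure b r) P) (hXY : X ⟂ᵢ[P] Y) (ha : 0 < a) (hb : 0 < b) (hr : 0 < r) :
    HasLaw (fun ω => X ω + Y ω) (gammaMeasure (a + b) r) P := by
  have := isProbabilityMeasureBeta ha hb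
  exact measurePreserving_fst.hasLaw.comp (hasLaw_add_div_gammaMeasure hX hY hXY ha hb hr)

theorem hasLaw_div_add_betaMeasure (hX : HasLaw X (gammaMeasure a r) P)
    (hY : HasLaw Y (gammaMeasure b r) P) (hXY : X ⟂ᵢ[P] Y) (ha : 0 < a) (hb : 0 < b) (hr : 0 < r) :
    HasLaw (fun ω => X ω / (X ω + Y ω)) (betaMeasure a b) P := by
  have := isProbabilityMeasure_gammaMeasure (add_pos ha hb) hr
  have := isProbabilityMeasureBeta ha hb
  exact measurePreserving_snd.hasLaw.comp (hasLaw_add_div_gammaMeasure hX hY hXY ha hb hr)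

theorem hasLaw_sum_gammaMeasure {ι : Type*} {X : ι → Ω → ℝ} {a : ι → ℝ} {s : Finset ι}
    (hs : s.Nonempty) (hX : ∀ i, HasLaw (X i) (gammaMeasure (a i) r) P) (hindep : iIndepFun X P)
    (ha : ∀ i, 0 < a i) (hr : 0 < r) :
    HasLaw (fun ω => ∑ i ∈ s, X i ω) (gammaMeasure (∑ i ∈ s, a i) r) P := by
  induction hs using Finset.Nonempty.cons_induction with
  | singleton i => simpa only [Finset.sum_singleton] using hX i
  | cons i s hi hs ih =>
    have hind : X i ⟂ᵢ[P] fun ω => ∑ j ∈ s, X j ω := by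
      simpa only [Finset.sum_fn] using
        (hindep.indepFun_finsetSum_of_notMem₀ (fun j => (hX j).aemeasurable) hi).symm
    simp only [Finset.sum_cons]
    exact hasLaw_add_gammaMeasure (hX i) ih hind (ha i) (Finset.sum_pos (fun j _ => ha j) hs) hr

end HasLaw

lemma setLIntegral_abs_mul_comp_sq (f : ℝ → ℝ≥0∞) {s : Set ℝ} (hs : MeasurableSet s)
    (hinj : Set.InjOn (fun x : ℝ => x ^ 2) s) :
    ∫⁻ x in s, ENNReal.ofReal |x| * f (x ^ 2) = 2⁻¹ * ∫⁻ y in (fun x : ℝ => x ^ 2) '' s, f y := by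
  have hderiv : ∀ x ∈ s, HasDerivWithinAt (fun x : ℝ => x ^ 2) (2 * x) s x :=
    fun x _ => by simpa using (hasDerivAt_pow 2 x).hasDerivWithinAt
  rw [lintegral_image_eq_lintegral_abs_deriv_mul hs hderiv hinj,
    ← lintegral_const_mul' _ _ (by simp)]
  refine lintegral_congr fun x => ?_
  rw [abs_mul, abs_two, ENNReal.ofReal_mul zero_le_two, ENNReal.ofReal_ofNat, mul_assoc,
    ENNReal.inv_mul_cancel_left (by simp) (by simp)]

lemma lintegral_abs_mul_comp_sq (f : ℝ → ℝ≥0∞) :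
    ∫⁻ x, ENNReal.ofReal |x| * f (x ^ 2) = ∫⁻ y in Set.Ioi 0, f y := by
  have himage_pos : (fun x : ℝ => x ^ 2) '' Set.Ioi 0 = Set.Ioi 0 :=
    Set.Subset.antisymm (Set.image_subset_iff.2 fun x (hx : 0 < x) => pow_pos hx 2)
      fun y hy => ⟨√y, Real.sqrt_pos.2 hy, Real.sq_sqrt (le_of_lt hy)⟩
  have himage_neg : (fun x : ℝ => x ^ 2) '' Set.Iio 0 = Set.Ioi 0 := by
    rw [← neg_zero, ← Set.image_neg_Ioi, Set.image_image, neg_zero]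
    simpa only [neg_sq] using himage_pos
  have hinj_pos : Set.InjOn (fun x : ℝ => x ^ 2) (Set.Ioi 0) := fun x hx y hy h =>
    (sq_eq_sq₀ (le_of_lt hx) (le_of_lt hy)).1 h
  have hinj_neg : Set.InjOn (fun x : ℝ => x ^ 2) (Set.Iio 0) := fun x hx y hy h =>
    neg_injective <| hinj_pos (Set.mem_Ioi.2 (neg_pos.2 hx)) (Set.mem_Ioi.2 (neg_pos.2 hy))
      (by simpa only [neg_sq] using h)
  rw [← setLIntegral_univ, ← Set.Iic_union_Ioi (a := (0 : ℝ)),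
    lintegral_union measurableSet_Ioi (Set.Iic_disjoint_Ioi le_rfl),
    setLIntegral_congr Iio_ae_eq_Iic.symm,
    setLIntegral_abs_mul_comp_sq f measurableSet_Iio hinj_neg,
    setLIntegral_abs_mul_comp_sq f measurableSet_Ioi hinj_pos, himage_neg, himage_pos, ← add_mul,
    ENNReal.inv_two_add_inv_two, one_mul]

lemma gaussianPDF_zero_eq_abs_mul_gammaPDF {v : NNReal} (hv : v ≠ 0) {x : ℝ} (hx : x ≠ 0) :
    gaussianPDF 0 v x = ENNReal.ofReal |x| * gammaPDF (1 / 2) (1 / (2 * v)) (x ^ 2) := by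
  have hx' : 0 < |x| := abs_pos.2 hx
  have : (0 : ℝ) < v := NNReal.coe_pos.2 hv.bot_lt
  have hpow : (|x| ^ 2) ^ (1 / 2 - 1 : ℝ) = |x|⁻¹ := by
    rw [← Real.rpow_natCast, ← Real.rpow_mul hx'.le]
    norm_num [Real.rpow_neg_one]
  rw [gaussianPDF, gammaPDF_of_nonneg (sq_nonneg x), ← ENNReal.ofReal_mul hx'.le,
    gaussianPDFReal, Real.Gamma_one_half_eq, ← sq_abs x, hpow, sub_zero, sq_abs,
    ← Real.sqrt_eq_rpow, Real.sqrt_div zero_le_one, Real.sqrt_one, mul_right_comm 2,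
    Real.sqrt_mul (by positivity)]
  field_simp

theorem map_sq_gaussianReal {v : NNReal} (hv : v ≠ 0) :
    (gaussianReal 0 v).map (fun x => x ^ 2) = gammaMeasure (1 / 2) (1 / (2 * v)) := by
  have := measurable_gammaPDF (1 / 2) (1 / (2 * v))
  refine Measure.ext_of_lintegral _ fun g hg => ?_
  rw [lintegral_map hg (by fun_prop), gaussianReal_of_var_ne_zero 0 hv, gammaMeasure,
    lintegral_withDensity_eq_lintegral_mul _ (by fun_prop) (by fun_prop),
    lintegral_withDensity_eq_lintegral_mul _ (by fun_prop) hg]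
  calc ∫⁻ x, (gaussianPDF 0 v * fun x => g (x ^ 2)) x
      = ∫⁻ x, ENNReal.ofReal |x| * (gammaPDF (1 / 2) (1 / (2 * v)) * g) (x ^ 2) := by
        refine lintegral_congr_ae ?_
        filter_upwards [Measure.ae_ne volume 0] with x hx
        simp only [Pi.mul_apply, gaussianPDF_zero_eq_abs_mul_gammaPDF hv hx, mul_assoc]
    _ = ∫⁻ y in Set.Ioi 0, (gammaPDF (1 / 2) (1 / (2 * v)) * g) y :=
        lintegral_abs_mul_comp_sq _
    _ = ∫⁻ y, (gammaPDF (1 / 2) (1 / (2 * v)) * g) y := by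
        rw [setLIntegral_congr Ioi_ae_eq_Ici]
        refine setLIntegral_eq_of_support_subset fun y hy => ?_
        by_contra hy'
        exact hy (by simp [gammaPDF_of_neg (not_le.1 hy')])

theorem hasLaw_sum_sq_pi_gaussianReal (ι : Type*) [Fintype ι] [Nonempty ι] :
    HasLaw (fun x : ι → ℝ => ∑ i, x i ^ 2) (gammaMeasure (Fintype.card ι / 2) (1 / 2))
      (Measure.pi fun _ => gaussianReal 0 1) := by
  have hsq : HasLaw (fun x : ℝ => x ^ 2) (gammaMeasure (1 / 2) (1 / 2)) (gaussianReal 0 1) :=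
    ⟨by fun_prop, by simpa using map_sq_gaussianReal one_ne_zero⟩
  have hcoord (i : ι) : HasLaw (fun x : ι → ℝ => x i ^ 2) (gammaMeasure (1 / 2) (1 / 2))
      (Measure.pi fun _ => gaussianReal 0 1) :=
    hsq.comp (measurePreserving_eval (fun _ => gaussianReal 0 1) i).hasLaw
  have hindep : iIndepFun (fun i (x : ι → ℝ) => x i ^ 2) (Measure.pi fun _ => gaussianReal 0 1) :=
    iIndepFun_pi (X := fun _ (t : ℝ) => t ^ 2) fun _ => by fun_prop
  simpa [div_eq_mul_inv] using hasLaw_sum_gammaMeasure Finset.univ_nonempty hcoord hindep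
    (fun _ => one_half_pos) one_half_pos

section StdGaussian

variable {E F : Type*} [NormedAddCommGroup E] [InnerProductSpace ℝ E] [FiniteDimensional ℝ E]
  [MeasurableSpace E] [BorelSpace E] [NormedAddCommGroup F] [InnerProductSpace ℝ F]
  [FiniteDimensional ℝ F] [MeasurableSpace F] [BorelSpace F]

theorem hasLaw_norm_sq_stdGaussian [Nontrivial E] :
    HasLaw (fun x : E => ‖x‖ ^ 2) (gammaMeasure (Module.finrank ℝ E / 2) (1 / 2))
      (stdGaussian E) := by
  have : Nonempty (Fin (Module.finrank ℝ E)) := Fin.pos_iff_nonempty.1 Module.finrank_pos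
  have hsum : HasLaw (fun x : Fin (Module.finrank ℝ E) → ℝ => ‖WithLp.toLp 2 x‖ ^ 2)
      (gammaMeasure (Module.finrank ℝ E / 2) (1 / 2)) (Measure.pi fun _ => gaussianReal 0 1) := by
    simpa [EuclideanSpace.real_norm_sq_eq] using
      hasLaw_sum_sq_pi_gaussianReal (Fin (Module.finrank ℝ E))
  have hrepr : HasLaw (stdOrthonormalBasis ℝ E).repr (stdGaussian _) (stdGaussian E) :=
    ⟨by fun_prop, stdGaussian_map _⟩
  simpa using HasLaw.comp_of_hasLaw_comp (f := fun y => ‖y‖ ^ 2) (by fun_prop)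
    ⟨by fun_prop, map_pi_eq_stdGaussian⟩ hrepr hsum

theorem stdGaussian_prod :
    ((stdGaussian E).prod (stdGaussian F)).map (WithLp.toLp 2) =
      stdGaussian (WithLp 2 (E × F)) := by
  refine Measure.ext_of_charFun (funext fun t => ?_)
  rw [charFun_prod, charFun_stdGaussian, charFun_stdGaussian, charFun_stdGaussian,
    ← Complex.exp_add, ← Complex.ofReal_pow ‖t‖, WithLp.prod_norm_sq_eq_of_L2]
  congr 1
  simp only [WithLp.ofLp_fst, WithLp.ofLp_snd]
  push_cast
  ring

theorem hasLaw_norm_fst_sq_div_stdGaussian [Nontrivial E] [Nontrivial F] :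
    HasLaw (fun z : WithLp 2 (E × F) => ‖z.fst‖ ^ 2 / ‖z‖ ^ 2)
      (betaMeasure (Module.finrank ℝ E / 2) (Module.finrank ℝ F / 2))
      (stdGaussian (WithLp 2 (E × F))) := by
  have hfst : HasLaw (fun z : E × F => ‖z.1‖ ^ 2) (gammaMeasure (Module.finrank ℝ E / 2) (1 / 2))
      ((stdGaussian E).prod (stdGaussian F)) :=
    hasLaw_norm_sq_stdGaussian.comp measurePreserving_fst.hasLaw
  have hsnd : HasLaw (fun z : E × F => ‖z.2‖ ^ 2) (gammaMeasure (Module.finrank ℝ F / 2) (1 / 2))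
      ((stdGaussian E).prod (stdGaussian F)) :=
    hasLaw_norm_sq_stdGaussian.comp measurePreserving_snd.hasLaw
  have hindep : (fun z : E × F => ‖z.1‖ ^ 2) ⟂ᵢ[(stdGaussian E).prod (stdGaussian F)]
      fun z => ‖z.2‖ ^ 2 :=
    indepFun_prod (X := fun x : E => ‖x‖ ^ 2) (Y := fun y : F => ‖y‖ ^ 2)
      (by fun_prop) (by fun_prop)
  have hfrac := hasLaw_div_add_betaMeasure hfst hsnd hindep
    (half_pos (Nat.cast_pos.2 Module.finrank_pos)) (half_pos (Nat.cast_pos.2 Module.finrank_pos))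
    one_half_pos
  refine HasLaw.comp_of_hasLaw_comp (f := fun z : WithLp 2 (E × F) => ‖z.fst‖ ^ 2 / ‖z‖ ^ 2)
    (by fun_prop) ⟨by fun_prop, stdGaussian_prod⟩ HasLaw.id ?_
  simpa only [WithLp.prod_norm_sq_eq_of_L2, WithLp.toLp_fst, WithLp.toLp_snd] using hfrac

theorem hasLaw_norm_starProjection_sq_div_stdGaussian (K : Submodule ℝ E) [Nontrivial K]
    [Nontrivial Kᗮ] :
    HasLaw (fun x => ‖K.starProjection x‖ ^ 2 / ‖x‖ ^ 2)
      (betaMeasure (Module.finrank ℝ K / 2) (Module.finrank ℝ Kᗮ / 2)) (stdGaussian E) := by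
  have hdecomp : HasLaw K.orthogonalDecomposition (stdGaussian (WithLp 2 (K × Kᗮ)))
      (stdGaussian E) := ⟨by fun_prop, stdGaussian_map _⟩
  have hfrac := (hasLaw_norm_fst_sq_div_stdGaussian (E := K) (F := Kᗮ)).fun_comp hdecomp
  simp only [LinearIsometryEquiv.norm_map] at hfrac
  simpa using hfrac

end StdGaussian

section RestrictScalars

variable {𝕜 E : Type*} [RCLike 𝕜] [NormedAddCommGroup E] [InnerProductSpace ℝ E]

variable (𝕜) in
lemma real_inner_eq_re_inner_of_same_norm [InnerProductSpace 𝕜 E] (x y : E) :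
    inner ℝ x y = RCLike.re (inner 𝕜 x y) := by
  rw [real_inner_eq_norm_add_mul_self_sub_norm_mul_self_sub_norm_mul_self_div_two,
    re_inner_eq_norm_add_mul_self_sub_norm_mul_self_sub_norm_mul_self_div_two]

lemma isSymmetricProjection_restrictScalars [InnerProductSpace 𝕜 E]
    [LinearMap.CompatibleSMul E E ℝ 𝕜] {T : E →ₗ[𝕜] E} (hT : T.IsSymmetricProjection) :
    (T.restrictScalars ℝ).IsSymmetricProjection where
  isIdempotentElem := LinearMap.ext fun x => congr($hT.isIdempotentElem x)
  isSymmetric x y := by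
    simp only [real_inner_eq_re_inner_of_same_norm 𝕜, LinearMap.restrictScalars_apply,
      hT.isSymmetric x y]

theorem hasLaw_norm_sq_div_stdGaussian_of_isSymmetricProjection [InnerProductSpace ℂ E]
    [IsScalarTower ℝ ℂ E] [FiniteDimensional ℝ E] [MeasurableSpace E] [BorelSpace E] {T : E →ₗ[ℂ] E}
    (hT : T.IsSymmetricProjection) [Nontrivial T.range] [Nontrivial T.ker] :
    HasLaw (fun x => ‖T x‖ ^ 2 / ‖x‖ ^ 2)
      (betaMeasure (Module.finrank ℂ T.range) (Module.finrank ℂ T.ker)) (stdGaussian E) := by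
  have hreal := isSymmetricProjection_restrictScalars hT
  obtain ⟨_, hproj⟩ := LinearMap.isSymmetricProjection_iff_eq_coe_starProjection_range.1 hreal
  have horth : (T.restrictScalars ℝ).rangeᗮ = (T.restrictScalars ℝ).ker :=
    hreal.isSymmetric.orthogonal_range
  have : Nontrivial (T.restrictScalars ℝ).range := ‹Nontrivial T.range›
  have : Nontrivial (T.restrictScalars ℝ).rangeᗮ := horth ▸ ‹Nontrivial T.ker›
  have hfinrank (S : Submodule ℂ E) : Module.finrank ℝ S = 2 * Module.finrank ℂ S := by
    rw [← Module.finrank_mul_finrank ℝ ℂ S, Complex.finrank_real_complex]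
  have hrange : (Module.finrank ℝ (T.restrictScalars ℝ).range : ℝ) / 2 =
      Module.finrank ℂ T.range := by
    rw [show Module.finrank ℝ (T.restrictScalars ℝ).range = _ from hfinrank T.range]
    simp
  have hker : (Module.finrank ℝ (T.restrictScalars ℝ).rangeᗮ : ℝ) / 2 =
      Module.finrank ℂ T.ker := by
    rw [horth, show Module.finrank ℝ (T.restrictScalars ℝ).ker = _ from hfinrank T.ker]
    simp
  have hlaw := hasLaw_norm_starProjection_sq_div_stdGaussian (T.restrictScalars ℝ).range
  rw [hrange, hker] at hlaw
  refine hlaw.congr (.of_forall fun x => ?_)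
  exact congr(‖$hproj x‖ ^ 2 / ‖x‖ ^ 2)

end RestrictScalars

lemma betaMeasure_real_apply {α β : ℝ} (hα : 0 < α) (hβ : 0 < β) {B : Set ℝ}
    (hB : MeasurableSet B) : (betaMeasure α β).real B = ∫ u in B, betaPDFReal α β u := by
  have hnonneg (u : ℝ) : 0 ≤ betaPDFReal α β u := by
    by_cases hu : 0 < u ∧ u < 1
    · exact (betaPDFReal_pos hu.1 hu.2 hα hβ).le
    · rw [betaPDFReal, if_neg hu]
  rw [measureReal_def, betaMeasure, withDensity_apply _ hB,
    integral_eq_lintegral_of_nonneg_ae (.of_forall hnonneg)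
      (measurable_betaPDFReal α β).aestronglyMeasurable]
  rfl

lemma betaPDFReal_natCast_succ (k l : ℕ) :
    betaPDFReal (k + 1) (l + 1) = (Set.Ioo 0 1).indicator fun u =>
      ((k + l + 1).factorial : ℝ) / (k.factorial * l.factorial) * (u ^ k * (1 - u) ^ l) := by
  funext u
  have hsum : (k + 1 + (l + 1) : ℝ) = (k + l + 1 : ℕ) + 1 := by push_cast; ring
  simp only [Set.indicator_apply, Set.mem_Ioo, betaPDFReal, beta, hsum, Real.Gamma_nat_eq_factorial,
    add_sub_cancel_right, Real.rpow_natCast, one_div_div, mul_assoc]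

lemma betaMeasure_natCast_real_apply {m n : ℕ} (hm : 0 < m) (hn : 0 < n) {B : Set ℝ}
    (hB : MeasurableSet B) :
    (betaMeasure m n).real B =
      ((m + n - 1).factorial : ℝ) / ((m - 1).factorial * (n - 1).factorial) *
        ∫ u in Set.Icc 0 1 ∩ B, u ^ (m - 1) * (1 - u) ^ (n - 1) := by
  obtain ⟨k, rfl⟩ := Nat.exists_eq_add_one.2 hm
  obtain ⟨l, rfl⟩ := Nat.exists_eq_add_one.2 hn
  have hsum : k + 1 + (l + 1) - 1 = k + l + 1 := by omega
  rw [betaMeasure_real_apply (Nat.cast_pos.2 hm) (Nat.cast_pos.2 hn) hB, hsum]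
  push_cast
  rw [betaPDFReal_natCast_succ, setIntegral_indicator measurableSet_Ioo, integral_const_mul,
    Set.inter_comm, setIntegral_congr_set (Ioo_ae_eq_Icc.inter (ae_eq_refl B))]

lemma Icc_union_Icc_eq_Icc_inter_setOf_sq_le_sub_sq {a b x ε : ℝ} (hx : x ∈ Set.Icc a b)
    (hε : 0 ≤ ε) :
    Set.Icc a (x - ε) ∪ Set.Icc (x + ε) b = Set.Icc a b ∩ {u | ε ^ 2 ≤ (u - x) ^ 2} := by
  obtain ⟨hax, hxb⟩ := hx
  ext u
  simp only [Set.mem_union, Set.mem_inter_iff, Set.mem_Icc, Set.mem_ofPred_eq, sq_le_sq,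
    abs_of_nonneg hε, le_abs']
  grind

section Action

variable {G X : Type*} [Group G] [MeasurableSpace G] [MeasurableInv G] [MulAction G X]
  [MeasurableSpace X] [MeasurableSMul₂ G X]

theorem eq_map_inv_smul_of_ae_mem_orbit [MeasurableMul G] (μ : Measure G)
    [IsProbabilityMeasure μ] [μ.IsMulLeftInvariant] (ν : Measure X) [IsProbabilityMeasure ν]
    [SMulInvariantMeasure G X ν] {x₀ : X} (hν : ∀ᵐ x ∂ν, x ∈ MulAction.orbit G x₀) :
    ν = μ.map (fun g => g⁻¹ • x₀) := by
  have hact : Measurable fun g : G => g⁻¹ • x₀ := by fun_prop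
  have horbit : ∀ x ∈ MulAction.orbit G x₀,
      μ.map (fun g => g⁻¹ • x) = μ.map (fun g => g⁻¹ • x₀) := by
    rintro _ ⟨h, rfl⟩
    conv_rhs => rw [← map_mul_left_eq_self μ h⁻¹, Measure.map_map hact (measurable_const_mul _)]
    simp only [Function.comp_def, mul_inv_rev, inv_inv, mul_smul]
  refine Measure.ext_of_lintegral _ fun f hf => ?_
  calc ∫⁻ x, f x ∂ν = ∫⁻ g, ∫⁻ x, f (g⁻¹ • x) ∂ν ∂μ := by
        simp only [fun g : G => (measurePreserving_smul g⁻¹ ν).lintegral_comp hf, lintegral_const,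
          measure_univ, mul_one]
    _ = ∫⁻ x, ∫⁻ g, f (g⁻¹ • x) ∂μ ∂ν := by
        exact lintegral_lintegral_swap (by fun_prop)
    _ = ∫⁻ x, ∫⁻ y, f y ∂(μ.map fun g => g⁻¹ • x₀) ∂ν := by
        refine lintegral_congr_ae ?_
        filter_upwards [hν] with x hx
        rw [← horbit x hx, lintegral_map hf (by fun_prop)]
    _ = ∫⁻ y, f y ∂(μ.map fun g => g⁻¹ • x₀) := by simp

end Action

section NormalizedStdGaussian

variable (E : Type*) [NormedAddCommGroup E] [InnerProductSpace ℝ E] [FiniteDimensional ℝ E]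
  [MeasurableSpace E] [BorelSpace E]

/-- The law of `x / ‖x‖` for a standard Gaussian vector `x`: the rotation-invariant probability
measure on the unit sphere, regarded as a measure on the whole space. -/
def normalizedStdGaussian : Measure E := (stdGaussian E).map fun x => ‖x‖⁻¹ • x

instance : IsProbabilityMeasure (normalizedStdGaussian E) :=
  Measure.isProbabilityMeasure_map (by fun_prop)

variable {E}

lemma map_linearIsometry_normalizedStdGaussian (f : E →ₗᵢ[ℝ] E) :
    (normalizedStdGaussian E).map f = normalizedStdGaussian E := by
  have hgauss : (stdGaussian E).map f = stdGaussian E :=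
    stdGaussian_map (f.toLinearIsometryEquiv rfl)
  conv_rhs => rw [normalizedStdGaussian, ← hgauss]
  rw [normalizedStdGaussian, Measure.map_map (by fun_prop) (by fun_prop),
    Measure.map_map (by fun_prop) (by fun_prop)]
  simp only [Function.comp_def, map_smul, LinearIsometry.norm_map]

lemma ae_ne_zero_stdGaussian [Nontrivial E] : ∀ᵐ x ∂stdGaussian E, x ≠ 0 := by
  have hgamma : ∀ᵐ t ∂gammaMeasure (Module.finrank ℝ E / 2) (1 / 2), t ≠ 0 :=
    withDensity_absolutelyContinuous _ _ (Measure.ae_ne volume 0)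
  have hnorm : ∀ᵐ x ∂stdGaussian E, ‖x‖ ^ 2 ≠ 0 :=
    (hasLaw_norm_sq_stdGaussian.ae_iff measurableSet_eq.compl.mem).2 hgamma
  filter_upwards [hnorm] with x hx
  simpa using hx

lemma ae_norm_eq_one_normalizedStdGaussian [Nontrivial E] :
    ∀ᵐ x ∂normalizedStdGaussian E, ‖x‖ = 1 := by
  rw [normalizedStdGaussian,
    ae_map_iff (by fun_prop) (measurableSet_eq_fun (by fun_prop) (by fun_prop))]
  filter_upwards [ae_ne_zero_stdGaussian] with x hx
  exact norm_smul_inv_norm hx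

theorem hasLaw_norm_sq_normalizedStdGaussian_of_isSymmetricProjection [InnerProductSpace ℂ E]
    [IsScalarTower ℝ ℂ E] {T : E →ₗ[ℂ] E} (hT : T.IsSymmetricProjection) [Nontrivial T.range]
    [Nontrivial T.ker] :
    HasLaw (fun x => ‖T x‖ ^ 2)
      (betaMeasure (Module.finrank ℂ T.range) (Module.finrank ℂ T.ker))
      (normalizedStdGaussian E) := by
  have : FiniteDimensional ℂ E := .right ℝ ℂ E
  have hcont : Continuous T := T.continuous_of_finiteDimensional
  have hscale (x : E) : ‖T (‖x‖⁻¹ • x)‖ ^ 2 = ‖T x‖ ^ 2 / ‖x‖ ^ 2 := by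
    rw [T.map_smul_of_tower, norm_smul, norm_inv, norm_norm]
    field_simp
  exact HasLaw.comp_of_hasLaw_comp (f := fun x => ‖T x‖ ^ 2) (by fun_prop) ⟨by fun_prop, rfl⟩
    HasLaw.id ((hasLaw_norm_sq_div_stdGaussian_of_isSymmetricProjection hT).congr
      (.of_forall hscale))

end NormalizedStdGaussian

section UnitaryGroup

instance {m n R : Type*} [Countable m] [Countable n] [TopologicalSpace R]
    [SecondCountableTopology R] : SecondCountableTopology (Matrix m n R) :=
  inferInstanceAs (SecondCountableTopology (m → n → R))

variable {n R : Type*} [Fintype n] [DecidableEq n] [CommRing R] [StarRing R]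

lemma unitaryGroup_smul_eq_mulVec (U : Matrix.unitaryGroup n R) (v : n → R) :
    U • v = (U : Matrix n n R) *ᵥ v :=
  rfl

instance [TopologicalSpace R] [IsTopologicalRing R] :
    ContinuousSMul (Matrix.unitaryGroup n R) (n → R) :=
  ⟨(continuous_subtype_val.comp continuous_fst).matrix_mulVec continuous_snd⟩

end UnitaryGroup

section ToEuclideanLin

variable {m n 𝕜 : Type*} [RCLike 𝕜] [Finite m] [Fintype n] [DecidableEq n]

lemma isSymmetricProjection_toEuclideanLin {P : Matrix n n 𝕜} (hidem : IsIdempotentElem P)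
    (hherm : P.IsHermitian) : P.toEuclideanLin.IsSymmetricProjection where
  isIdempotentElem := by
    rw [IsIdempotentElem, Module.End.mul_eq_comp, ← Matrix.toLpLin_mul_same, hidem.eq]
  isSymmetric := Matrix.isSymmetric_toEuclideanLin_iff.2 hherm

lemma finrank_range_toEuclideanLin (A : Matrix m n 𝕜) :
    Module.finrank 𝕜 A.toEuclideanLin.range = A.rank := by
  rw [Matrix.toEuclideanLin, Matrix.toLpLin_eq_toLin, ← Matrix.rank_eq_finrank_range_toLin]

lemma finrank_ker_toEuclideanLin (A : Matrix m n 𝕜) :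
    Module.finrank 𝕜 A.toEuclideanLin.ker = Fintype.card n - A.rank := by
  have hsum := A.toEuclideanLin.finrank_range_add_finrank_ker
  rw [finrank_range_toEuclideanLin, finrank_euclideanSpace] at hsum
  exact (Nat.sub_eq_of_eq_add' hsum.symm).symm

end ToEuclideanLin

section Sphere

variable {D : ℕ}

lemma nsq_eq_norm_sq_toLp (v : Fin D → ℂ) : nsq v = ‖WithLp.toLp 2 v‖ ^ 2 := by
  rw [EuclideanSpace.norm_sq_eq, nsq]

lemma measurable_nsq : Measurable (nsq : (Fin D → ℂ) → ℝ) := by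
  unfold nsq
  fun_prop

lemma nsq_eq_one_iff_norm_toLp_eq_one (v : Fin D → ℂ) : nsq v = 1 ↔ ‖WithLp.toLp 2 v‖ = 1 := by
  rw [nsq_eq_norm_sq_toLp, pow_eq_one_iff_of_nonneg (norm_nonneg _) two_ne_zero]

lemma ofReal_nsq (v : Fin D → ℂ) : (nsq v : ℂ) = star v ⬝ᵥ v := by
  simp [nsq, dotProduct, Complex.conj_mul']

lemma nsq_unitary_smul (U : UG D) (v : Fin D → ℂ) : nsq (U • v) = nsq v := by
  have hU : (U : Matrix (Fin D) (Fin D) ℂ)ᴴ * U = 1 := Matrix.mem_unitaryGroup_iff'.1 U.2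
  rw [← Complex.ofReal_inj, ofReal_nsq, ofReal_nsq, unitaryGroup_smul_eq_mulVec, Matrix.star_mulVec,
    Matrix.dotProduct_mulVec, Matrix.vecMul_vecMul, hU, Matrix.vecMul_one]

/-- The action of a unitary matrix on `ℂ^D`, as an isometry of the underlying real Euclidean
space. -/
def unitaryIsometry (U : UG D) : EuclideanSpace ℂ (Fin D) →ₗᵢ[ℝ] EuclideanSpace ℂ (Fin D) where
  toLinearMap := (Matrix.toEuclideanLin (U : Matrix (Fin D) (Fin D) ℂ)).restrictScalars ℝ
  norm_map' x := by
    have hsq : ‖WithLp.toLp 2 (U • WithLp.ofLp x)‖ ^ 2 = ‖x‖ ^ 2 := by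
      rw [← nsq_eq_norm_sq_toLp, nsq_unitary_smul, nsq_eq_norm_sq_toLp]
    exact (sq_eq_sq₀ (norm_nonneg _) (norm_nonneg _)).1 hsq

/-- The unitarily invariant probability measure on the unit sphere of `ℂ^D`, regarded as a measure
on `ℂ^D` and constructed by normalising a standard Gaussian vector. For `D = 0` it is the Dirac
measure at `0`. -/
def unitSphereMeasure (D : ℕ) : Measure (Fin D → ℂ) :=
  (normalizedStdGaussian (EuclideanSpace ℂ (Fin D))).map WithLp.ofLp

instance : IsProbabilityMeasure (unitSphereMeasure D) :=
  Measure.isProbabilityMeasure_map (by fun_prop)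

instance : SMulInvariantMeasure (UG D) (Fin D → ℂ) (unitSphereMeasure D) := by
  refine ((smulInvariantMeasure_tfae (UG D) (unitSphereMeasure D)).out 0 5).2 fun U => ?_
  conv_rhs =>
    rw [unitSphereMeasure, ← map_linearIsometry_normalizedStdGaussian (unitaryIsometry U)]
  rw [unitSphereMeasure, Measure.map_map (by fun_prop) (by fun_prop),
    Measure.map_map (by fun_prop) (by fun_prop)]
  rfl

lemma ae_nsq_eq_one_unitSphereMeasure [NeZero D] : ∀ᵐ v ∂unitSphereMeasure D, nsq v = 1 := by
  rw [unitSphereMeasure,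
    ae_map_iff (by fun_prop) (measurableSet_eq_fun measurable_nsq measurable_const)]
  simpa only [nsq_eq_one_iff_norm_toLp_eq_one] using
    ae_norm_eq_one_normalizedStdGaussian (E := EuclideanSpace ℂ (Fin D))

lemma mem_orbit_single_of_nsq_eq_one (i : Fin D) {v : Fin D → ℂ} (hv : nsq v = 1) :
    v ∈ MulAction.orbit (UG D) (Pi.single i 1) := by
  have hv' : Orthonormal ℂ
      (Set.domRestrict {i} fun _ : Fin D => (WithLp.toLp 2 v : EuclideanSpace ℂ (Fin D))) :=
    ⟨fun _ => (nsq_eq_one_iff_norm_toLp_eq_one v).1 hv,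
      fun j k hjk => absurd (Subsingleton.elim j k) hjk⟩
  obtain ⟨b, hb⟩ := hv'.exists_orthonormalBasis_extension_of_card_eq (by simp)
  refine ⟨⟨(EuclideanSpace.basisFun (Fin D) ℂ).toBasis.toMatrix b,
    (EuclideanSpace.basisFun (Fin D) ℂ).toMatrix_orthonormalBasis_mem_unitary b⟩, ?_⟩
  simp only [unitaryGroup_smul_eq_mulVec, Matrix.mulVec_single_one]
  ext j
  simp [Module.Basis.toMatrix_apply, hb i rfl]

lemma mem_orbit_of_nsq_eq_one {v w : Fin D → ℂ} (hv : nsq v = 1) (hw : nsq w = 1) :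
    v ∈ MulAction.orbit (UG D) w := by
  obtain ⟨i⟩ : Nonempty (Fin D) := by
    by_contra! h
    simp [nsq] at hv
  rw [MulAction.orbit_eq_iff.2 (mem_orbit_single_of_nsq_eq_one i hw)]
  exact mem_orbit_single_of_nsq_eq_one i hv

lemma dotc_rotProj_mulVec {P : Matrix (Fin D) (Fin D) ℂ} (hidem : IsIdempotentElem P)
    (hherm : P.IsHermitian) (U : UG D) (φ : Fin D → ℂ) :
    dotc φ (rotProj U P *ᵥ φ) = nsq (P *ᵥ U⁻¹ • φ) := by
  set V := ((U⁻¹ : UG D) : Matrix (Fin D) (Fin D) ℂ) with hV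
  have hU : Vᴴ = U := by
    rw [hV, Matrix.UnitaryGroup.inv_val, Matrix.star_eq_conjTranspose,
      Matrix.conjTranspose_conjTranspose]
  calc dotc φ (rotProj U P *ᵥ φ)
    _ = star φ ⬝ᵥ (Vᴴ * (Pᴴ * P) * V) *ᵥ φ := by
        rw [hU, hherm.eq, hidem.eq]
        rfl
    _ = star ((P * V) *ᵥ φ) ⬝ᵥ (P * V) *ᵥ φ := by
        rw [Matrix.star_mulVec, ← Matrix.dotProduct_mulVec, Matrix.mulVec_mulVec,
          Matrix.conjTranspose_mul]
        simp only [mul_assoc]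
    _ = nsq (P *ᵥ U⁻¹ • φ) := by
        rw [ofReal_nsq, unitaryGroup_smul_eq_mulVec, Matrix.mulVec_mulVec]

theorem hasLaw_nsq_mulVec_unitSphereMeasure {P : Matrix (Fin D) (Fin D) ℂ}
    (hidem : IsIdempotentElem P) (hherm : P.IsHermitian) (hr : 0 < P.rank) (hrD : P.rank < D) :
    HasLaw (fun v => nsq (P *ᵥ v)) (betaMeasure P.rank (D - P.rank : ℕ)) (unitSphereMeasure D) := by
  have hrange := finrank_range_toEuclideanLin P
  have hker : Module.finrank ℂ P.toEuclideanLin.ker = D - P.rank := by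
    rw [finrank_ker_toEuclideanLin, Fintype.card_fin]
  have : Nontrivial P.toEuclideanLin.range := Module.finrank_pos_iff.1 (hrange ▸ hr)
  have : Nontrivial P.toEuclideanLin.ker := Module.finrank_pos_iff.1 (hker ▸ Nat.sub_pos_of_lt hrD)
  have hlaw := hasLaw_norm_sq_normalizedStdGaussian_of_isSymmetricProjection
    (isSymmetricProjection_toEuclideanLin hidem hherm)
  rw [hrange, hker] at hlaw
  refine HasLaw.comp_of_hasLaw_comp (f := fun v => nsq (P *ᵥ v))
    (measurable_nsq.comp (by fun_prop)).aemeasurable ⟨by fun_prop, rfl⟩ HasLaw.id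
    (hlaw.congr (.of_forall fun x => nsq_eq_norm_sq_toLp (P *ᵥ x.ofLp)))

theorem eq_map_inv_smul_of_ae_nsq_eq_one (μ : Measure (UG D)) [μ.IsMulLeftInvariant]
    [IsProbabilityMeasure μ] {φ : Fin D → ℂ} (hφ : nsq φ = 1) {w : Measure (Fin D → ℂ)}
    [IsProbabilityMeasure w] [SMulInvariantMeasure (UG D) (Fin D → ℂ) w]
    (hw : ∀ᵐ v ∂w, nsq v = 1) : w = μ.map (fun U => U⁻¹ • φ) :=
  eq_map_inv_smul_of_ae_mem_orbit μ w (hw.mono fun _ hv => mem_orbit_of_nsq_eq_one hv hφ)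

end Sphere

theorem stmt12_general (D d : ℕ) (hd : 0 < d) (hdD : d < D)
    (P : Matrix (Fin D) (Fin D) ℂ) (hP1 : P * P = P) (hP2 : P.IsHermitian) (hPr : P.rank = d)
    (φ : Fin D → ℂ) (hφ : nsq φ = 1) (a : ℝ) (ha : 0 ≤ a)
    (μ : Measure (UG D)) [μ.IsMulLeftInvariant] [IsProbabilityMeasure μ]
    (w : Measure (Fin D → ℂ)) [IsProbabilityMeasure w]
    (hsupp : w {v : Fin D → ℂ | nsq v = 1}ᶜ = 0)
    (hinv : ∀ U : UG D,
      Measure.map (fun v => (U : Matrix (Fin D) (Fin D) ℂ).mulVec v) w = w) :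
    (μ {U : UG D | a ≤ ((dotc φ ((rotProj U P).mulVec φ)).re - d / D) ^ 2}).toReal =
        (Nat.factorial (D - 1) : ℝ) / (Nat.factorial (d - 1) * Nat.factorial (D - d - 1)) *
          ∫ u in Set.Icc (0:ℝ) (d / D - Real.sqrt a) ∪ Set.Icc ((d : ℝ) / D + Real.sqrt a) 1,
            u ^ (d - 1) * (1 - u) ^ (D - d - 1) ∧
      (w {v : Fin D → ℂ | a ≤ (nsq (P.mulVec v) - d / D) ^ 2}).toReal =
        (Nat.factorial (D - 1) : ℝ) / (Nat.factorial (d - 1) * Nat.factorial (D - d - 1)) *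
          ∫ u in Set.Icc (0:ℝ) (d / D - Real.sqrt a) ∪ Set.Icc ((d : ℝ) / D + Real.sqrt a) 1,
            u ^ (d - 1) * (1 - u) ^ (D - d - 1) := by
  have : NeZero D := ⟨by omega⟩
  have : SMulInvariantMeasure (UG D) (Fin D → ℂ) w :=
    ((smulInvariantMeasure_tfae (UG D) w).out 0 5).2 hinv
  have hB : MeasurableSet {u : ℝ | a ≤ (u - d / D) ^ 2} :=
    measurableSet_le measurable_const (by fun_prop)
  have hbeta : (betaMeasure d (D - d : ℕ)).real {u | a ≤ (u - d / D) ^ 2} = _ :=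
    betaMeasure_natCast_real_apply hd (Nat.sub_pos_of_lt hdD) hB
  rw [Nat.add_sub_of_le hdD.le] at hbeta
  have hmean : (d / D : ℝ) ∈ Set.Icc 0 1 :=
    ⟨by positivity, div_le_one_of_le₀ (Nat.cast_le.2 hdD.le) (Nat.cast_nonneg D)⟩
  rw [Icc_union_Icc_eq_Icc_inter_setOf_sq_le_sub_sq hmean a.sqrt_nonneg, Real.sq_sqrt ha,
    ← hbeta]
  have hw : w = μ.map (fun U => U⁻¹ • φ) := eq_map_inv_smul_of_ae_nsq_eq_one μ hφ hsupp
  have hsphere : unitSphereMeasure D = μ.map (fun U => U⁻¹ • φ) :=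
    eq_map_inv_smul_of_ae_nsq_eq_one μ hφ ae_nsq_eq_one_unitSphereMeasure
  have hlaw : HasLaw (fun v => nsq (P *ᵥ v)) (betaMeasure d (D - d : ℕ)) w := by
    subst hPr
    rw [hw, ← hsphere]
    exact hasLaw_nsq_mulVec_unitSphereMeasure hP1 hP2 hd hdD
  have horbit : HasLaw (fun U : UG D => U⁻¹ • φ) w μ := ⟨by fun_prop, hw.symm⟩
  simp only [dotc_rotProj_mulVec hP1 hP2, Complex.ofReal_re]
  exact ⟨(hlaw.fun_comp horbit).measureReal_eq hB, hlaw.measureReal_eq hB⟩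

theorem stmt12 (D d : ℕ) (hd1 : 1 < d) (hd2 : d + 1 < D)
    (P : Matrix (Fin D) (Fin D) ℂ) (hP1 : P * P = P) (hP2 : P.IsHermitian) (hPr : P.rank = d)
    (φ : Fin D → ℂ) (hφ : nsq φ = 1)
    (a : ℝ) (ha0 : 0 ≤ a) (ha1 : Real.sqrt a < d / D) (ha2 : Real.sqrt a + d / D < 1)
    (μ : Measure (UG D)) [μ.IsHaarMeasure] [IsProbabilityMeasure μ]
    (w : Measure (Fin D → ℂ)) [IsProbabilityMeasure w]
    (hsupp : w {v : Fin D → ℂ | nsq v = 1}ᶜ = 0)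
    (hinv : ∀ U : UG D,
      Measure.map (fun v => (U : Matrix (Fin D) (Fin D) ℂ).mulVec v) w = w) :
    (μ {U : UG D | a ≤ ((dotc φ ((rotProj U P).mulVec φ)).re - d / D) ^ 2}).toReal =
        (Nat.factorial (D - 1) : ℝ) / (Nat.factorial (d - 1) * Nat.factorial (D - d - 1)) *
          ∫ u in Set.Icc (0:ℝ) (d / D - Real.sqrt a) ∪ Set.Icc ((d : ℝ) / D + Real.sqrt a) 1,
            u ^ (d - 1) * (1 - u) ^ (D - d - 1) ∧
      (w {v : Fin D → ℂ | a ≤ (nsq (P.mulVec v) - d / D) ^ 2}).toReal =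
        (Nat.factorial (D - 1) : ℝ) / (Nat.factorial (d - 1) * Nat.factorial (D - d - 1)) *
          ∫ u in Set.Icc (0:ℝ) (d / D - Real.sqrt a) ∪ Set.Icc ((d : ℝ) / D + Real.sqrt a) 1,
            u ^ (d - 1) * (1 - u) ^ (D - d - 1) :=
  stmt12_general D d (by omega) (by omega) P hP1 hP2 hPr φ hφ a ha0 μ w hsupp hinv
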